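/- Suppose Fix(P_S ∘ T) ≠ ∅. Then the averaged operator U = (1/2)·(P_S ∘ T) + (1/2)·Id is firmly quasinonexpansive on S: for every y ∈ S and every x ∈ Fix(P_S ∘ T), ‖U y − x‖² + ‖U y − y‖² ≤ ‖y − x‖². -/

import Mathlib

open scoped ENNReal RealInnerProductSpace Pointwise Topology
open Filter

noncomputable section

variable {X : Type*} [NormedAddCommGroup X] [InnerProductSpace ℝ X] [FiniteDimensional ℝ X]

/-- The point `(x, t)` of the lifted space `E = X ×₂ ℝ` (Euclidean product). -/
def pt (x : X) (t : ℝ) : WithLp 2 (X × ℝ) := (WithLp.equiv 2 (X × ℝ)).symm (x, t)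

/-- First (`X`-) coordinate of a point of the lifted space. -/
def fstE (z : WithLp 2 (X × ℝ)) : X := (WithLp.equiv 2 (X × ℝ) z).1

/-- Second (`ℝ`-) coordinate of a point of the lifted space. -/
def sndE (z : WithLp 2 (X × ℝ)) : ℝ := (WithLp.equiv 2 (X × ℝ) z).2

/-- Orthogonal projection `P_S` onto the affine subspace `S = X × {1}`. -/
def PS (z : WithLp 2 (X × ℝ)) : WithLp 2 (X × ℝ) := pt (fstE z) 1

/-- A closed gauge: a convex, lower semicontinuous, positively homogeneous
function `κ : E → [0,∞]` on the lifted space. -/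
def IsClosedGauge (κ : WithLp 2 (X × ℝ) → ℝ≥0∞) : Prop :=
  LowerSemicontinuous κ ∧
  (∀ z w : WithLp 2 (X × ℝ), ∀ a b : ℝ, 0 ≤ a → 0 ≤ b → a + b = 1 →
    κ (a • z + b • w) ≤ ENNReal.ofReal a * κ z + ENNReal.ofReal b * κ w) ∧
  (∀ t : ℝ, 0 ≤ t → ∀ z, κ (t • z) = ENNReal.ofReal t * κ z)

/-- The objective `u ↦ max {κ(u), ‖z − u‖}` defining the polar proximal map. -/
def polarObj (κ : WithLp 2 (X × ℝ) → ℝ≥0∞) (z u : WithLp 2 (X × ℝ)) : ℝ≥0∞ :=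
  max (κ u) (ENNReal.ofReal ‖z - u‖)

/-- `T` is the polar proximal map of `κ`: for every `z`, `T z` is the unique
minimizer of `u ↦ max {κ(u), ‖z − u‖}`. -/
def IsPolarProx (κ : WithLp 2 (X × ℝ) → ℝ≥0∞)
    (T : WithLp 2 (X × ℝ) → WithLp 2 (X × ℝ)) : Prop :=
  ∀ z, (∀ u, polarObj κ z (T z) ≤ polarObj κ z u) ∧
    (∀ u, (∀ v, polarObj κ z u ≤ polarObj κ z v) → u = T z)

/-!
Write `u = T z` and `r = ‖z - u‖`. Shrinking `u` towards `0` shows `κ u ≤ r`, so the optimal value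
is `r`, and by uniqueness of the minimizer `u` is the projection of `z` onto the sublevel set
`{κ ≤ r}`; hence `⟪z - u, w - u⟫ ≤ 0` whenever `κ w ≤ r` (`polarProx_variational`).

With `p = P_S (T y)`, the claimed inequality is equivalent to `‖p - x‖ ≤ ‖y - x‖`, that is to
`2 ⟪d₁, x₁ - u₁⟫ ≤ ‖d₁‖²`, where `u = T y` and `d = y - u`. A fixed point `x` has `T x = (x₁, s)`
with `x - T x = (0, 1 - s)`. Positive homogeneity makes `T x`, rescaled by the ratio of the two
optimal values, a competitor in the variational inequality at `y`, and `T y`, rescaled by the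
inverse ratio, a competitor at `x`. Together with the competitor `0`, these two inequalities
yield the bound. If `κ x = 0` (the case `s = 1`), arbitrarily large multiples of `x` serve instead;
if `T y = y` there is nothing to prove.
-/

lemma IsClosedGauge.map_zero {κ : WithLp 2 (X × ℝ) → ℝ≥0∞} (hκ : IsClosedGauge κ) : κ 0 = 0 := by
  have h := hκ.2.2 0 le_rfl 0
  simpa using h

/-- The gauge value at the polar proximal point does not exceed the distance to it. -/
lemma gauge_polarProx_le {κ : WithLp 2 (X × ℝ) → ℝ≥0∞} (hκ : IsClosedGauge κ)
    {T : WithLp 2 (X × ℝ) → WithLp 2 (X × ℝ)} (hT : IsPolarProx κ T) (z : WithLp 2 (X × ℝ)) :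
    κ (T z) ≤ ENNReal.ofReal ‖z - T z‖ := by
  obtain ⟨hmin, -⟩ := hT z
  set u := T z with hu
  by_contra! hlt
  have hfin : κ u ≠ ⊤ := by
    have h0 : κ u ≤ ENNReal.ofReal ‖z‖ := by
      have h := (le_max_left _ _).trans (hmin 0)
      simpa [polarObj, hκ.map_zero] using h
    exact (h0.trans_lt ENNReal.ofReal_lt_top).ne
  obtain ⟨c, hc0, hc⟩ : ∃ c : ℝ, 0 ≤ c ∧ κ u = ENNReal.ofReal c :=
    ⟨(κ u).toReal, ENNReal.toReal_nonneg, (ENNReal.ofReal_toReal hfin).symm⟩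
  rw [hc, ENNReal.ofReal_lt_ofReal_iff_of_nonneg (norm_nonneg _)] at hlt
  have hcpos : 0 < c := (norm_nonneg _).trans_lt hlt
  -- A small enough contraction `(1 - ε) • u` strictly improves the objective.
  obtain ⟨ε, hε0, hε1, hε⟩ : ∃ ε : ℝ, 0 < ε ∧ ε ≤ 1 ∧ ε * ‖u‖ < c - ‖z - u‖ := by
    have hδ : 0 < c - ‖z - u‖ := sub_pos.2 hlt
    have hn := norm_nonneg u
    have hden : 0 < c - ‖z - u‖ + ‖u‖ := by linarith
    refine ⟨(c - ‖z - u‖) / (c - ‖z - u‖ + ‖u‖ + 1), by positivity, ?_, ?_⟩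
    · rw [div_le_one (by linarith)]; linarith
    · rw [div_mul_eq_mul_div, div_lt_iff₀ (by linarith)]
      nlinarith
  have h1 : ‖z - (1 - ε) • u‖ < c := by
    have : z - (1 - ε) • u = (z - u) + ε • u := by module
    rw [this]
    refine (norm_add_le _ _).trans_lt ?_
    rw [norm_smul, Real.norm_of_nonneg hε0.le]
    linarith
  have h2 : κ ((1 - ε) • u) < ENNReal.ofReal c := by
    rw [hκ.2.2 _ (by linarith), hc, ← ENNReal.ofReal_mul (by linarith),
      ENNReal.ofReal_lt_ofReal_iff hcpos]
    nlinarith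
  have h3 : polarObj κ z ((1 - ε) • u) < ENNReal.ofReal c :=
    max_lt h2 ((ENNReal.ofReal_lt_ofReal_iff hcpos).2 h1)
  have h4 : ENNReal.ofReal c ≤ polarObj κ z u := hc ▸ le_max_left _ _
  exact absurd (h4.trans (hmin _)) (not_le.2 h3)

/-- `T z` is the projection of `z` onto the sublevel set `{κ ≤ ‖z - T z‖}`, expressed as a
variational inequality. -/
lemma polarProx_variational {κ : WithLp 2 (X × ℝ) → ℝ≥0∞} (hκ : IsClosedGauge κ)
    {T : WithLp 2 (X × ℝ) → WithLp 2 (X × ℝ)} (hT : IsPolarProx κ T) (z w : WithLp 2 (X × ℝ))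
    (hw : κ w ≤ ENNReal.ofReal ‖z - T z‖) : ⟪z - T z, w - T z⟫ ≤ 0 := by
  have hu := gauge_polarProx_le hκ hT z
  set K : Set (WithLp 2 (X × ℝ)) := {w | κ w ≤ ENNReal.ofReal ‖z - T z‖} with hK
  have hconv : Convex ℝ K := by
    intro a ha b hb s t hs ht hst
    refine (hκ.2.1 a b s t hs ht hst).trans ?_
    calc _ ≤ ENNReal.ofReal s * ENNReal.ofReal ‖z - T z‖
          + ENNReal.ofReal t * ENNReal.ofReal ‖z - T z‖ := by
          gcongr
          · exact ha
          · exact hb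
      _ = _ := by rw [← add_mul, ← ENNReal.ofReal_add hs ht, hst]; simp
  have : Nonempty K := ⟨⟨T z, hu⟩⟩
  refine (norm_eq_iInf_iff_real_inner_le_zero hconv hu).1 ?_ w hw
  refine le_antisymm (le_ciInf fun v => ?_) (ciInf_le ⟨0, ?_⟩ (⟨T z, hu⟩ : K))
  · by_contra! hlt
    -- A strictly closer point of the sublevel set would be a second minimizer.
    have hv : (v : WithLp 2 (X × ℝ)) = T z := by
      refine (hT z).2 _ fun q => le_trans ?_ ((hT z).1 q)
      exact (max_le v.2 (ENNReal.ofReal_le_ofReal hlt.le)).trans (le_max_right _ _)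
    rw [hv] at hlt
    exact lt_irrefl _ hlt
  · rintro _ ⟨v, rfl⟩
    exact norm_nonneg _

lemma inner_eq_fstE_sndE (z w : WithLp 2 (X × ℝ)) :
    ⟪z, w⟫ = ⟪fstE z, fstE w⟫ + sndE z * sndE w := by
  rw [WithLp.prod_inner_apply, mul_comm]
  rfl

lemma norm_sq_eq_fstE_sndE (z : WithLp 2 (X × ℝ)) :
    ‖z‖ ^ 2 = ‖fstE z‖ ^ 2 + sndE z ^ 2 := by
  rw [← real_inner_self_eq_norm_sq, inner_eq_fstE_sndE, real_inner_self_eq_norm_sq, sq (sndE z)]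

/-- The variational inequalities at `y` and `x` in coordinates: with `d = y - T y`, `u = T y` and
`v = T x = (x₁, s)`, one has `a = ⟪d₁, x₁⟫`, `b = ⟪d₁, u₁⟫`, `N = ‖d₁‖²`, `r = ‖d‖` and
`q = 1 - s = ‖x - v‖`. -/
lemma two_mul_sub_le_of_variational {a b N u₂ r q : ℝ} (hr : 0 < r) (hq : 0 < q)
    (hN : r ^ 2 = N + (1 - u₂) ^ 2) (hN0 : 0 ≤ N)
    (h0 : 0 ≤ b + (1 - u₂) * u₂)
    (hy : r / q * a - b + (1 - u₂) * (r / q * (1 - q) - u₂) ≤ 0)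
    (hx : q / r * u₂ ≤ 1 - q) :
    2 * (a - b) ≤ N := by
  set k := r / q with hk
  have hkq : k * q = r := by rw [hk]; field_simp
  have hkpos : 0 < k := by positivity
  have hu : u₂ ≤ k - r := by
    have : k * (q / r * u₂) = u₂ := by rw [hk]; field_simp
    nlinarith [mul_le_mul_of_nonneg_left hx hkpos.le]
  have hd : 1 - u₂ ≤ r := by nlinarith
  have hk1 : 1 ≤ k := by linarith
  have hkey : k * (a - b) ≤ (1 - u₂) * (r - k * (1 - u₂)) := by
    have e : k * (1 - q) = k - r := by linarith
    rw [e] at hy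
    nlinarith [mul_nonneg (sub_nonneg.2 hk1) h0]
  have : k * (2 * (a - b)) ≤ k * N := by
    have h2 : 2 * (1 - u₂) * r ≤ r ^ 2 + (1 - u₂) ^ 2 := by nlinarith [sq_nonneg (r - (1 - u₂))]
    have h3 := mul_nonneg (sub_nonneg.2 hk1) (add_nonneg (sq_nonneg r) (sq_nonneg (1 - u₂)))
    have h4 : N = r ^ 2 - (1 - u₂) ^ 2 := by linarith
    rw [h4]
    nlinarith
  exact le_of_mul_le_mul_left this hkpos

/-- Quasinonexpansiveness of `P_S ∘ T` on `S`, in terms of the `X`-coordinates. -/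
lemma two_inner_le_norm_sq {κ : WithLp 2 (X × ℝ) → ℝ≥0∞} (hκ : IsClosedGauge κ)
    {T : WithLp 2 (X × ℝ) → WithLp 2 (X × ℝ)} (hT : IsPolarProx κ T)
    {x y : WithLp 2 (X × ℝ)} (hy : sndE y = 1) (hx : PS (T x) = x) :
    2 * ⟪fstE (y - T y), fstE x - fstE (T y)⟫ ≤ ‖fstE (y - T y)‖ ^ 2 := by
  have fsub : ∀ z w : WithLp 2 (X × ℝ), fstE (z - w) = fstE z - fstE w := fun _ _ => rfl
  have ssub : ∀ z w : WithLp 2 (X × ℝ), sndE (z - w) = sndE z - sndE w := fun _ _ => rfl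
  have fsmul : ∀ (c : ℝ) (w : WithLp 2 (X × ℝ)), fstE (c • w) = c • fstE w := fun _ _ => rfl
  have ssmul : ∀ (c : ℝ) (w : WithLp 2 (X × ℝ)), sndE (c • w) = c * sndE w := fun _ _ => rfl
  have f0 : fstE (0 : WithLp 2 (X × ℝ)) = 0 := rfl
  have s0 : sndE (0 : WithLp 2 (X × ℝ)) = 0 := rfl
  have hx1 : fstE (T x) = fstE x := by
    have h : fstE (PS (T x)) = fstE x := by rw [hx]
    exact h
  have hx2 : sndE x = 1 := (congrArg sndE hx).symm
  have hκu := gauge_polarProx_le hκ hT y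
  have hκv := gauge_polarProx_le hκ hT x
  have vy := polarProx_variational hκ hT y
  have vx := polarProx_variational hκ hT x
  have hny := norm_sq_eq_fstE_sndE (y - T y)
  have hnx := norm_sq_eq_fstE_sndE (x - T x)
  have hr0 := norm_nonneg (y - T y)
  have hq0 := norm_nonneg (x - T x)
  have zy := vy 0 (by simp [hκ.map_zero])
  have zx := vx 0 (by simp [hκ.map_zero])
  simp only [inner_eq_fstE_sndE, ssub, hy, hx2, s0] at vy vx zy zx hny hnx
  have hfx : fstE (x - T x) = 0 := by rw [fsub, hx1, sub_self]
  simp only [hfx, inner_zero_left, zero_add, norm_zero] at vx zx hnx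
  rw [fsub 0, f0, zero_sub, inner_neg_right] at zy
  rw [inner_sub_right]
  have scale : ∀ (c p : ℝ) (w : WithLp 2 (X × ℝ)), 0 ≤ c → κ w ≤ ENNReal.ofReal p →
      κ (c • w) ≤ ENNReal.ofReal (c * p) := by
    intro c p w hc hw
    rw [hκ.2.2 c hc, ENNReal.ofReal_mul hc]
    gcongr
  generalize hrdef : ‖y - T y‖ = r at *
  generalize hqdef : ‖x - T x‖ = q at *
  have hs : q = 1 - sndE (T x) := by nlinarith
  rcases hr0.eq_or_lt with hr | hr
  · have h0 : y - T y = 0 := norm_eq_zero.1 (hrdef.trans hr.symm)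
    simp [h0, f0]
  rcases hq0.eq_or_lt with hq | hq
  · -- Here `κ (T x) = 0`, and all nonnegative multiples of `T x` are competitors at `y`.
    have hs1 : sndE (T x) = 1 := by linarith
    have hcomp : ∀ c : ℝ, 0 ≤ c →
        c * (⟪fstE (y - T y), fstE x⟫ + (1 - sndE (T y))) ≤
          ⟪fstE (y - T y), fstE (T y)⟫ + (1 - sndE (T y)) * sndE (T y) := by
      intro c hc
      have h := vy (c • T x) ((scale c q _ hc hκv).trans
        (ENNReal.ofReal_le_ofReal (by rw [← hq, mul_zero]; exact hr.le)))
      rw [fsub (_ • _), fsmul, ssmul, hx1, hs1, inner_sub_right, inner_smul_right] at h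
      linarith
    have hle : ⟪fstE (y - T y), fstE x⟫ + (1 - sndE (T y)) ≤ 0 := by
      by_contra! hpos
      obtain ⟨n, hn⟩ := exists_nat_gt
        ((⟪fstE (y - T y), fstE (T y)⟫ + (1 - sndE (T y)) * sndE (T y)) /
          (⟪fstE (y - T y), fstE x⟫ + (1 - sndE (T y))))
      rw [div_lt_iff₀ hpos] at hn
      exact absurd (hcomp n n.cast_nonneg) (not_le.2 hn)
    nlinarith [sq_nonneg (1 - sndE (T y)), sq_nonneg ‖fstE (y - T y)‖]
  · have h1 := vy ((r / q) • T x) ((scale (r / q) q _ (by positivity) hκv).trans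
      (ENNReal.ofReal_le_ofReal (by rw [div_mul_cancel₀ _ hq.ne'])))
    have h2 := vx ((q / r) • T y) ((scale (q / r) r _ (by positivity) hκu).trans
      (ENNReal.ofReal_le_ofReal (by rw [div_mul_cancel₀ _ hr.ne'])))
    rw [fsub (_ • _), fsmul, ssmul, hx1, inner_sub_right, inner_smul_right] at h1
    rw [ssmul, ← hs] at h2
    have hs' : sndE (T x) = 1 - q := by linarith
    rw [hs'] at h1 h2
    exact two_mul_sub_le_of_variational hr hq hny (sq_nonneg _) (by linarith) h1
      (by nlinarith)

/-- If `Fix (P_S ∘ T) ≠ ∅`, the averaged operator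
`U = (1/2)(P_S ∘ T) + (1/2) Id` is firmly quasinonexpansive on `S`. -/
theorem averaged_PS_comp_polarProx_firmlyQuasinonexpansive
    (κ : WithLp 2 (X × ℝ) → ℝ≥0∞) (hκ : IsClosedGauge κ)
    (T : WithLp 2 (X × ℝ) → WithLp 2 (X × ℝ)) (hT : IsPolarProx κ T)
    (hne : ∃ z, PS (T z) = z) :
    ∀ y : WithLp 2 (X × ℝ), sndE y = 1 →
      ∀ x : WithLp 2 (X × ℝ), PS (T x) = x →
        ‖((1 / 2 : ℝ) • PS (T y) + (1 / 2 : ℝ) • y) - x‖ ^ 2 +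
            ‖((1 / 2 : ℝ) • PS (T y) + (1 / 2 : ℝ) • y) - y‖ ^ 2 ≤
          ‖y - x‖ ^ 2 := by
  intro y hy x hx
  have h := two_inner_le_norm_sq hκ hT hy hx
  have hx2 : sndE x = 1 := (congrArg sndE hx).symm
  have hpx : ‖PS (T y) - x‖ ^ 2 ≤ ‖y - x‖ ^ 2 := by
    rw [norm_sq_eq_fstE_sndE, norm_sq_eq_fstE_sndE (y - x)]
    have e1 : fstE (PS (T y) - x) = -(fstE x - fstE (T y)) := (neg_sub _ _).symm
    have e2 : sndE (PS (T y) - x) = 0 := by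
      change 1 - sndE x = 0
      rw [hx2, sub_self]
    have e3 : fstE (y - x) = fstE (y - T y) - (fstE x - fstE (T y)) := by
      change fstE y - fstE x = (fstE y - fstE (T y)) - (fstE x - fstE (T y))
      abel
    have e4 : sndE (y - x) = 0 := by
      change sndE y - sndE x = 0
      rw [hx2, hy, sub_self]
    rw [e1, e2, e3, e4, norm_neg,
      norm_sub_sq_real (fstE (y - T y))]
    linarith
  -- By the parallelogram law, the left-hand side is `(‖P_S (T y) - x‖² + ‖y - x‖²) / 2`.
  have hp := parallelogram_law_with_norm ℝ (PS (T y) - x) (y - x)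
  have e1 : ((1 / 2 : ℝ) • PS (T y) + (1 / 2 : ℝ) • y) - x
      = (1 / 2 : ℝ) • ((PS (T y) - x) + (y - x)) := by module
  have e2 : ((1 / 2 : ℝ) • PS (T y) + (1 / 2 : ℝ) • y) - y
      = (1 / 2 : ℝ) • ((PS (T y) - x) - (y - x)) := by module
  rw [e1, e2, norm_smul, norm_smul, Real.norm_of_nonneg (by norm_num : (0 : ℝ) ≤ 1 / 2)]
  nlinarith
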